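/- For every alphabet Σ of size σ ≥ e^{10} and every n ∈ ℕ, if S ∈ Σⁿ is chosen uniformly at random, then E[n − L(S)] ≤ (σ²e² − e⁴)/(σ³ − 2σ²e² + e⁴). -/

import Mathlib

/-!
If `S` has length `n` and a border of length `ℓ < n`, then `n - ℓ` is a period of `S`. So `S` is
determined by its prefix of length `n - ℓ`, and passing to this prefix lowers `n - L(S)` by at most
`ℓ`. An unbordered `S` has `L(S) = n`. With `x = 1 / σ` and `a n = E[n - L(S)]`, summing over all
possible `ℓ` gives `a n ≤ ∑_{1 ≤ ℓ < n} x ^ ℓ * (ℓ + a (n - ℓ))`, hence `a n ≤ B` by strong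
induction, where `B = x / (1 - x) ^ 2 + B * x / (1 - x)`. This means
`B = σ / ((σ - 1) * (σ - 2))`, which lies below the claimed bound as soon as `2 * e ^ 2 ≤ σ`.
-/

open Finset

/-- `S` has a border of length `ℓ`: `1 ≤ ℓ ≤ |S|` and the length-`ℓ` prefix of `S`
equals its length-`ℓ` suffix. -/
def HasBorder {α : Type*} (S : List α) (ℓ : ℕ) : Prop :=
  1 ≤ ℓ ∧ ℓ ≤ S.length ∧ S.take ℓ = S.drop (S.length - ℓ)

/-- A string is unbordered if it has no proper border (no border of length `< |S|`). -/
def Unbordered {α : Type*} (S : List α) : Prop :=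
  ∀ ℓ, ℓ < S.length → ¬ HasBorder S ℓ

/-- `maxUnb S` is `L(S)`: the maximum length of (nonempty) unbordered factors of `S`. -/
noncomputable def maxUnb {α : Type*} (S : List α) : ℕ :=
  sSup {k | ∃ T, T ≠ [] ∧ T <:+: S ∧ Unbordered T ∧ T.length = k}

/-- `p > 0` is a period of `T` if `T[i] = T[i+p]` whenever both indices are valid. -/
def IsPeriod {α : Type*} (T : List α) (p : ℕ) : Prop :=
  0 < p ∧ ∀ (i : ℕ) (h : i + p < T.length),
    T[i]'(Nat.lt_of_le_of_lt (Nat.le_add_right i p) h) = T[i + p]'h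

/-- `per T` is the shortest period of `T`. -/
noncomputable def per {α : Type*} (T : List α) : ℕ := sInf {p | IsPeriod T p}

/-- `borderF S` is `F(S)`: the length of the shortest border of `S`. -/
noncomputable def borderF {α : Type*} (S : List α) : ℕ := sInf {ℓ | HasBorder S ℓ}

/-- `substr S i j` is the factor `S[i,j]` in 1-based closed-interval indexing. -/
def substr {α : Type*} (S : List α) (i j : ℕ) : List α := (S.drop (i - 1)).take (j + 1 - i)

section Lists

variable {α : Type*} {S T : List α}

theorem bddAbove_length_unbordered_infix (S : List α) :
    BddAbove {k | ∃ T, T ≠ [] ∧ T <:+: S ∧ Unbordered T ∧ T.length = k} := by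
  refine ⟨S.length, ?_⟩
  rintro k ⟨T, -, hT, -, rfl⟩
  exact hT.length_le

theorem maxUnb_le_length (S : List α) : maxUnb S ≤ S.length := by
  refine csSup_le' ?_
  rintro k ⟨T, -, hT, -, rfl⟩
  exact hT.length_le

theorem maxUnb_le_of_infix (h : T <:+: S) : maxUnb T ≤ maxUnb S := by
  refine csSup_le' ?_
  rintro k ⟨U, hne, hU, hunb, rfl⟩
  exact le_csSup (bddAbove_length_unbordered_infix S) ⟨U, hne, hU.trans h, hunb, rfl⟩

theorem Unbordered.length_le_maxUnb (h : Unbordered S) : S.length ≤ maxUnb S := by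
  by_cases hne : S = []
  · simp [hne]
  · exact le_csSup (bddAbove_length_unbordered_infix S) ⟨S, hne, List.infix_rfl, h, rfl⟩

theorem HasBorder.isPeriod {ℓ : ℕ} (h : HasBorder S ℓ) (hℓ : ℓ < S.length) :
    IsPeriod S (S.length - ℓ) := by
  obtain ⟨-, -, hborder⟩ := h
  refine ⟨Nat.sub_pos_of_lt hℓ, fun i hi => ?_⟩
  have hget : (S.take ℓ)[i]? = (S.drop (S.length - ℓ))[i]? := by rw [hborder]
  rw [List.getElem?_take_of_lt (by omega), List.getElem?_drop, Nat.add_comm,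
    List.getElem?_eq_getElem (by omega), List.getElem?_eq_getElem hi] at hget
  exact Option.some.inj hget

theorem IsPeriod.eq_of_take_eq {p : ℕ} (hS : IsPeriod S p) (hT : IsPeriod T p)
    (hlen : S.length = T.length) (htake : S.take p = T.take p) : S = T := by
  refine List.ext_getElem hlen fun i => ?_
  induction i using Nat.strong_induction_on with
  | _ i ih =>
    intro hiS hiT
    rcases lt_or_ge i p with hip | hpi
    · have hget : (S.take p)[i]? = (T.take p)[i]? := by rw [htake]
      simpa only [List.getElem?_take_of_lt hip, List.getElem?_eq_getElem hiS,
        List.getElem?_eq_getElem hiT, Option.some.injEq] using hget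
    · obtain ⟨j, rfl⟩ := Nat.exists_eq_add_of_le' hpi
      rw [← hS.2 j hiS, ← hT.2 j hiT]
      exact ih j (Nat.lt_add_of_pos_right hS.1) _ _

/-- The deficit `n - L(S)` of a string `S` of length `n`. The subtraction in `ℕ` never truncates, by
`maxUnb_le_length`. -/
noncomputable def unbDeficit (S : List α) : ℕ := S.length - maxUnb S

theorem cast_unbDeficit (S : List α) : (unbDeficit S : ℝ) = S.length - maxUnb S :=
  Nat.cast_sub (maxUnb_le_length S)

theorem Unbordered.unbDeficit_eq_zero (h : Unbordered S) : unbDeficit S = 0 :=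
  Nat.sub_eq_zero_of_le h.length_le_maxUnb

theorem unbDeficit_le_add_unbDeficit_take (S : List α) (ℓ : ℕ) :
    unbDeficit S ≤ ℓ + unbDeficit (S.take (S.length - ℓ)) := by
  have hmono : maxUnb (S.take (S.length - ℓ)) ≤ maxUnb S :=
    maxUnb_le_of_infix (List.take_prefix _ S).isInfix
  simp only [unbDeficit, List.length_take]
  omega

open Classical in
theorem unbDeficit_le_sum_hasBorder (S : List α) :
    unbDeficit S ≤ ∑ ℓ ∈ Ico 1 S.length with HasBorder S ℓ,
      (ℓ + unbDeficit (S.take (S.length - ℓ))) := by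
  by_cases hunb : Unbordered S
  · simp [hunb.unbDeficit_eq_zero]
  · obtain ⟨ℓ, hℓ, hborder⟩ : ∃ ℓ < S.length, HasBorder S ℓ := by
      simpa only [Unbordered, not_forall, not_not, exists_prop] using hunb
    have hmem : ℓ ∈ (Ico 1 S.length).filter (HasBorder S) :=
      mem_filter.2 ⟨mem_Ico.2 ⟨hborder.1, hℓ⟩, hborder⟩
    exact (unbDeficit_le_add_unbDeficit_take S ℓ).trans
      (single_le_sum_of_canonicallyOrdered
        (f := fun ℓ => ℓ + unbDeficit (S.take (S.length - ℓ))) hmem)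

end Lists

section RandomStrings

variable (Γ : Type*) {n ℓ : ℕ}

theorem injOn_take_hasBorder (hℓ : ℓ < n) :
    Set.InjOn (Fin.take (n - ℓ) (Nat.sub_le n ℓ))
      {S : Fin n → Γ | HasBorder (List.ofFn S) ℓ} := by
  intro S hS T hT htake
  have hperiod {U : Fin n → Γ} (hU : HasBorder (List.ofFn U) ℓ) :
      IsPeriod (List.ofFn U) (n - ℓ) := by
    simpa only [List.length_ofFn] using hU.isPeriod (by rwa [List.length_ofFn])
  refine List.ofFn_injective ((hperiod hS).eq_of_take_eq (hperiod hT) (by simp) ?_)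
  simpa only [Fin.ofFn_take_eq_take_ofFn] using congrArg List.ofFn htake

variable [Fintype Γ]

open Classical in
theorem sum_hasBorder_take_le (hℓ : ℓ < n) (f : (Fin (n - ℓ) → Γ) → ℕ) :
    ∑ S : Fin n → Γ with HasBorder (List.ofFn S) ℓ, f (Fin.take (n - ℓ) (Nat.sub_le n ℓ) S) ≤
      ∑ T, f T := by
  have hinj := injOn_take_hasBorder Γ hℓ
  rw [← sum_image (f := f) (by simpa only [coe_filter, mem_univ, true_and] using hinj)]
  exact sum_le_sum_of_subset (subset_univ _)

/-- The sum of the deficits `n - L(S)` over all strings `S` of length `n` over `Γ`. -/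
noncomputable def totalDeficit (n : ℕ) : ℕ := ∑ S : Fin n → Γ, unbDeficit (List.ofFn S)

theorem totalDeficit_le_sum (n : ℕ) :
    totalDeficit Γ n ≤
      ∑ ℓ ∈ Ico 1 n, (ℓ * Fintype.card Γ ^ (n - ℓ) + totalDeficit Γ (n - ℓ)) := by
  classical
  calc totalDeficit Γ n
      ≤ ∑ S : Fin n → Γ, ∑ ℓ ∈ Ico 1 n with HasBorder (List.ofFn S) ℓ,
          (ℓ + unbDeficit ((List.ofFn S).take (n - ℓ))) :=
        sum_le_sum fun S _ => by
          simpa only [List.length_ofFn] using unbDeficit_le_sum_hasBorder (List.ofFn S)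
    _ = ∑ ℓ ∈ Ico 1 n, ∑ S : Fin n → Γ with HasBorder (List.ofFn S) ℓ,
          (ℓ + unbDeficit (List.ofFn (Fin.take (n - ℓ) (Nat.sub_le n ℓ) S))) := by
        simp only [Fin.ofFn_take_eq_take_ofFn]
        exact sum_comm' (by simp [and_comm])
    _ ≤ ∑ ℓ ∈ Ico 1 n, ∑ T : Fin (n - ℓ) → Γ, (ℓ + unbDeficit (List.ofFn T)) :=
        sum_le_sum fun ℓ hℓ => sum_hasBorder_take_le Γ (mem_Ico.1 hℓ).2
          fun T => ℓ + unbDeficit (List.ofFn T)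
    _ = ∑ ℓ ∈ Ico 1 n, (ℓ * Fintype.card Γ ^ (n - ℓ) + totalDeficit Γ (n - ℓ)) := by
        simp [sum_add_distrib, totalDeficit, mul_comm]

/-- The expectation of `n - L(S)` for a uniformly random string `S` of length `n` over `Γ`,
with the junk value `0 / 0 = 0` when no such string exists. -/
noncomputable def meanDeficit (n : ℕ) : ℝ := totalDeficit Γ n / (Fintype.card Γ : ℝ) ^ n

theorem meanDeficit_eq_sum_div (n : ℕ) :
    meanDeficit Γ n =
      (∑ S : Fin n → Γ, ((n : ℝ) - maxUnb (List.ofFn S))) / (Fintype.card Γ : ℝ) ^ n := by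
  simp only [meanDeficit, totalDeficit, Nat.cast_sum, cast_unbDeficit, List.length_ofFn]

theorem meanDeficit_le_sum [Nonempty Γ] (n : ℕ) :
    meanDeficit Γ n ≤
      ∑ ℓ ∈ Ico 1 n, (Fintype.card Γ : ℝ)⁻¹ ^ ℓ * (ℓ + meanDeficit Γ (n - ℓ)) := by
  have htotal : (totalDeficit Γ n : ℝ) ≤
      ∑ ℓ ∈ Ico 1 n, (ℓ * (Fintype.card Γ : ℝ) ^ (n - ℓ) + totalDeficit Γ (n - ℓ)) := by
    exact_mod_cast totalDeficit_le_sum Γ n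
  refine (div_le_div_of_nonneg_right htotal (by positivity)).trans_eq ?_
  rw [sum_div]
  refine sum_congr rfl fun ℓ hℓ => ?_
  have hpow : (Fintype.card Γ : ℝ) ^ n = Fintype.card Γ ^ ℓ * Fintype.card Γ ^ (n - ℓ) := by
    rw [← pow_add, Nat.add_sub_cancel' (mem_Ico.1 hℓ).2.le]
  rw [meanDeficit, hpow, inv_pow]
  field_simp

end RandomStrings

theorem sum_Ico_one_pow_mul_add_le {x B : ℝ} (hx₀ : 0 ≤ x) (hx₁ : x < 1) (hB : 0 ≤ B) (n : ℕ) :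
    ∑ ℓ ∈ Ico 1 n, x ^ ℓ * (ℓ + B) ≤ x / (1 - x) ^ 2 + B * x / (1 - x) := by
  have hnorm : ‖x‖ < 1 := by rwa [Real.norm_of_nonneg hx₀]
  have hsum : HasSum (fun ℓ : ℕ => x ^ ℓ * (ℓ + B)) (x / (1 - x) ^ 2 + (1 - x)⁻¹ * B) := by
    simpa only [mul_add, mul_comm (x ^ _) (Nat.cast _)] using
      (hasSum_coe_mul_geometric_of_norm_lt_one hnorm).add
        ((hasSum_geometric_of_lt_one hx₀ hx₁).mul_right B)
  have hle := sum_le_hasSum (insert 0 (Ico 1 n)) (fun ℓ _ => by positivity) hsum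
  rw [sum_insert (by simp)] at hle
  have hgeom : (1 - x)⁻¹ * B = B + B * x / (1 - x) := by
    have : 1 - x ≠ 0 := by linarith
    field_simp
    ring
  simp only [pow_zero, Nat.cast_zero, zero_add, one_mul] at hle
  linarith

theorem le_of_le_sum_Ico_one_pow_mul {a : ℕ → ℝ} {x : ℝ} (hx₀ : 0 ≤ x) (hx : x < 1 / 2)
    (ha : ∀ n, a n ≤ ∑ ℓ ∈ Ico 1 n, x ^ ℓ * (ℓ + a (n - ℓ))) (n : ℕ) :
    a n ≤ x / ((1 - x) * (1 - 2 * x)) := by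
  have hx₁ : 0 < 1 - x := by linarith
  have hx₂ : 0 < 1 - 2 * x := by linarith
  set B := x / ((1 - x) * (1 - 2 * x)) with hB
  induction n using Nat.strong_induction_on with
  | _ n ih =>
    calc a n ≤ ∑ ℓ ∈ Ico 1 n, x ^ ℓ * (ℓ + a (n - ℓ)) := ha n
      _ ≤ ∑ ℓ ∈ Ico 1 n, x ^ ℓ * (ℓ + B) := by
          gcongr with ℓ hℓ
          obtain ⟨hℓ₁, hℓn⟩ := mem_Ico.1 hℓ
          exact ih (n - ℓ) (by omega)
      _ ≤ x / (1 - x) ^ 2 + B * x / (1 - x) :=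
          sum_Ico_one_pow_mul_add_le hx₀ (by linarith) (by positivity) n
      _ = B := by
          have hne : 1 - x * 2 ≠ 0 := by linarith
          rw [hB]
          field_simp
          ring

theorem div_sub_one_mul_sub_two_le {s E : ℝ} (hE : 3 ≤ E) (hs : 2 * E ≤ s) :
    s / ((s - 1) * (s - 2)) ≤ (s ^ 2 * E - E ^ 2) / (s ^ 3 - 2 * s ^ 2 * E + E ^ 2) := by
  have hs₁ : 0 < s - 1 := by linarith
  have hs₂ : 0 < s - 2 := by linarith
  have hden : 0 < s ^ 3 - 2 * s ^ 2 * E + E ^ 2 := by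
    have : 0 ≤ s ^ 2 * (s - 2 * E) := mul_nonneg (sq_nonneg s) (by linarith)
    nlinarith
  calc s / ((s - 1) * (s - 2)) ≤ E / s := by
        rw [div_le_div_iff₀ (by positivity) (by linarith)]
        calc s * s ≤ 3 * ((s - 1) * (s - 2)) := by nlinarith
          _ ≤ E * ((s - 1) * (s - 2)) := by gcongr
    _ ≤ (s ^ 2 * E - E ^ 2) / (s ^ 3 - 2 * s ^ 2 * E + E ^ 2) := by
        rw [div_le_div_iff₀ (by linarith) hden]
        have hsE : E ^ 2 * (s + E) ≤ E ^ 2 * (2 * s ^ 2) :=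
          mul_le_mul_of_nonneg_left (by nlinarith) (sq_nonneg E)
        linarith

theorem meanDeficit_le (Γ : Type*) [Fintype Γ] (hcard : 3 ≤ Fintype.card Γ) (n : ℕ) :
    meanDeficit Γ n ≤
      (Fintype.card Γ : ℝ) / (((Fintype.card Γ : ℝ) - 1) * ((Fintype.card Γ : ℝ) - 2)) := by
  have : Nonempty Γ := Fintype.card_pos_iff.1 (by omega)
  have hσ : (3 : ℝ) ≤ Fintype.card Γ := by exact_mod_cast hcard
  have hinv : (Fintype.card Γ : ℝ)⁻¹ < 1 / 2 := by
    rw [one_div]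
    exact inv_strictAnti₀ two_pos (by linarith)
  refine (le_of_le_sum_Ico_one_pow_mul (by positivity) hinv (meanDeficit_le_sum Γ) n).trans_eq ?_
  generalize (Fintype.card Γ : ℝ) = s at *
  have hs₁ : s - 1 ≠ 0 := by linarith
  have hs₂ : s - 2 ≠ 0 := by linarith
  field_simp

theorem two_mul_exp_two_le_exp_ten : 2 * Real.exp 2 ≤ Real.exp 10 := by
  have hexp₈ : (2 : ℝ) ≤ Real.exp 8 := by linarith [Real.add_one_le_exp (8 : ℝ)]
  calc 2 * Real.exp 2 ≤ Real.exp 8 * Real.exp 2 := by gcongr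
    _ = Real.exp 10 := by rw [← Real.exp_add]; norm_num

theorem expected_maxUnbordered_large_sigma_general {Γ : Type*} [Fintype Γ]
    (hΓ : 2 * Real.exp 2 ≤ Fintype.card Γ) (n : ℕ) :
    (∑ S : Fin n → Γ, ((n : ℝ) - (maxUnb (List.ofFn S) : ℝ))) / (Fintype.card Γ : ℝ) ^ n ≤
      ((Fintype.card Γ : ℝ) ^ 2 * Real.exp 2 - Real.exp 4) /
        ((Fintype.card Γ : ℝ) ^ 3 - 2 * (Fintype.card Γ : ℝ) ^ 2 * Real.exp 2 + Real.exp 4) := by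
  have hexp₂ : (3 : ℝ) ≤ Real.exp 2 := by linarith [Real.add_one_le_exp (2 : ℝ)]
  have hexp₄ : Real.exp 4 = Real.exp 2 ^ 2 := by rw [← Real.exp_nat_mul]; norm_num
  have hcard : 3 ≤ Fintype.card Γ := by
    have : (3 : ℝ) ≤ Fintype.card Γ := by linarith
    exact_mod_cast this
  rw [← meanDeficit_eq_sum_div, hexp₄]
  exact (meanDeficit_le Γ hcard n).trans
    (div_sub_one_mul_sub_two_le hexp₂ hΓ)

/-- for an alphabet of size `σ ≥ e¹⁰` and uniformly random `S ∈ Σⁿ`,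
`E[n - L(S)] ≤ (σ²e² - e⁴) / (σ³ - 2σ²e² + e⁴)`. -/
theorem expected_maxUnbordered_large_sigma (σ : ℕ) (hσ : Real.exp 10 ≤ (σ : ℝ))
    (Γ : Type) [Fintype Γ] (hcard : Fintype.card Γ = σ) (n : ℕ) :
    (∑ S : Fin n → Γ, ((n : ℝ) - (maxUnb (List.ofFn S) : ℝ))) / (σ : ℝ) ^ n ≤
      ((σ : ℝ) ^ 2 * Real.exp 2 - Real.exp 4) /
        ((σ : ℝ) ^ 3 - 2 * (σ : ℝ) ^ 2 * Real.exp 2 + Real.exp 4) := by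
  subst hcard
  exact expected_maxUnbordered_large_sigma_general (two_mul_exp_two_le_exp_ten.trans hσ) n
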